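/- For all n ≥ k ≥ 1, a_{2n+1,k} = (n−k+1)·a_{2n,k−2} + (n+1)·a_{2n,k−1} + (k+1)·a_{2n,k}, where a_{m,k} counts permutations of [m] with k even descents and no odd descents (with a_{m,j} = 0 for j < 0). -/

import Mathlib

open Finset

/-- The set of (0-based) descent indices of a permutation of `Fin n`:
`i` is a descent index if `π i > π (i+1)` (so the 1-based descent position is `i+1`). -/
def descentSet {n : ℕ} (π : Equiv.Perm (Fin n)) : Finset ℕ :=
  (Finset.range n).filter
    (fun i => ∃ h : i + 1 < n, π ⟨i + 1, h⟩ < π ⟨i, Nat.lt_of_succ_lt h⟩)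

/-- The number of descents of `π`. -/
def des {n : ℕ} (π : Equiv.Perm (Fin n)) : ℕ := (descentSet π).card

/-- The number of descents of `π` at odd (1-based) positions, i.e. even 0-based indices. -/
def odes {n : ℕ} (π : Equiv.Perm (Fin n)) : ℕ :=
  ((descentSet π).filter (fun i => Even i)).card

/-- The number of descents of `π` at even (1-based) positions, i.e. odd 0-based indices. -/
def edes {n : ℕ} (π : Equiv.Perm (Fin n)) : ℕ :=
  ((descentSet π).filter (fun i => Odd i)).card

/-- The refined Eulerian polynomial `A_n(p,q) = Σ_π p^{odes π} q^{edes π}`. -/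
def refinedEulerian (n : ℕ) (p q : ℝ) : ℝ :=
  ∑ π : Equiv.Perm (Fin n), p ^ odes π * q ^ edes π

/-- The Eulerian polynomial `A_n(q) = Σ_π q^{des π}` as a function. -/
def eulerianEval (n : ℕ) (q : ℝ) : ℝ :=
  ∑ π : Equiv.Perm (Fin n), q ^ des π

/-- The Eulerian polynomial `A_n(q)` as a polynomial. -/
noncomputable def eulerianPolynomial (n : ℕ) : Polynomial ℝ :=
  ∑ π : Equiv.Perm (Fin n), Polynomial.X ^ des π

/-- The Eulerian number `A_{n,k}`: the number of permutations of `[n]` with `k` descents. -/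
def eulerianNumber (n k : ℕ) : ℕ :=
  (Finset.univ.filter (fun π : Equiv.Perm (Fin n) => des π = k)).card

/-- A permutation `a_1 a_2 … a_n` is alternating if `a_1 > a_2 < a_3 > ⋯`. -/
def IsAlternating {n : ℕ} (π : Equiv.Perm (Fin n)) : Prop :=
  ∀ i : ℕ, ∀ h : i + 1 < n,
    (π ⟨i + 1, h⟩ < π ⟨i, Nat.lt_of_succ_lt h⟩ ↔ Even i)

open scoped Classical in
/-- The Euler number `E_n`: the number of alternating permutations of `[n]`. -/
noncomputable def eulerNumber (n : ℕ) : ℕ :=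
  (Finset.univ.filter (fun π : Equiv.Perm (Fin n) => IsAlternating π)).card

/-- `a_{n,k}`: the number of permutations of `[n]` with `k` even descents and no odd descents. -/
def aNum (n k : ℕ) : ℕ :=
  (Finset.univ.filter (fun π : Equiv.Perm (Fin n) => edes π = k ∧ odes π = 0)).card

/-- `a_{m,k}` extended to integer index `k`, with value `0` for `k < 0`. -/
def aNumInt (m : ℕ) (k : ℤ) : ℕ := if 0 ≤ k then aNum m k.toNat else 0

open Polynomial

/-- The permutation of `Fin (m + 1)` with last value `r` whose other values are in the same relative
order as those of `σ`. -/
def insertLast {m : ℕ} (σ : Equiv.Perm (Fin m)) (r : Fin (m + 1)) : Equiv.Perm (Fin (m + 1)) :=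
  finSuccEquivLast.trans ((Equiv.optionCongr σ).trans (finSuccEquiv' r).symm)

@[simp] lemma insertLast_last {m : ℕ} (σ : Equiv.Perm (Fin m)) (r : Fin (m + 1)) :
    insertLast σ r (Fin.last m) = r := by
  simp [insertLast]

@[simp] lemma insertLast_castSucc {m : ℕ} (σ : Equiv.Perm (Fin m)) (r : Fin (m + 1)) (i : Fin m) :
    insertLast σ r i.castSucc = r.succAbove (σ i) := by
  simp [insertLast]

lemma insertLast_bijective (m : ℕ) :
    Function.Bijective
      (fun x : Equiv.Perm (Fin m) × Fin (m + 1) => insertLast x.1 x.2) := by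
  rw [Fintype.bijective_iff_injective_and_card]
  refine ⟨?_, ?_⟩
  · rintro ⟨σ, r⟩ ⟨τ, s⟩ h
    simp only at h
    have hr : r = s := by
      rw [← insertLast_last σ r, h, insertLast_last]
    subst hr
    have hσ : σ = τ := by
      ext1 i
      apply Fin.succAbove_right_injective (p := r)
      rw [← insertLast_castSucc, h, insertLast_castSucc]
    rw [hσ]
  · simp [Fintype.card_perm, Nat.factorial_succ, mul_comm]

lemma mem_descentSet {n : ℕ} (π : Equiv.Perm (Fin n)) (i : ℕ) :
    i ∈ descentSet π ↔ ∃ h : i + 1 < n, π ⟨i + 1, h⟩ < π ⟨i, Nat.lt_of_succ_lt h⟩ := by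
  simp only [descentSet, mem_filter, mem_range, and_iff_right_iff_imp]
  rintro ⟨h, -⟩
  omega

lemma descentSet_insertLast {m : ℕ} (σ : Equiv.Perm (Fin (m + 1))) (r : Fin (m + 2)) :
    descentSet (insertLast σ r) =
      if r ≤ (σ (Fin.last m)).castSucc then insert m (descentSet σ) else descentSet σ := by
  have hlast : m ∈ descentSet (insertLast σ r) ↔ r ≤ (σ (Fin.last m)).castSucc := by
    have h1 : (⟨m + 1, by omega⟩ : Fin (m + 2)) = Fin.last (m + 1) := rfl
    have h2 : (⟨m, by omega⟩ : Fin (m + 2)) = (Fin.last m).castSucc := rfl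
    rw [mem_descentSet]
    simp only [h1, h2, insertLast_last, insertLast_castSucc, Fin.lt_succAbove_iff_le_castSucc]
    simp
  have hne : ∀ i, i ≠ m → (i ∈ descentSet (insertLast σ r) ↔ i ∈ descentSet σ) := by
    intro i hi
    rw [mem_descentSet, mem_descentSet]
    by_cases h : i + 1 < m + 1
    · have h1 : (⟨i + 1, by omega⟩ : Fin (m + 2)) = (⟨i + 1, h⟩ : Fin (m + 1)).castSucc := rfl
      have h2 : (⟨i, by omega⟩ : Fin (m + 2)) = (⟨i, by omega⟩ : Fin (m + 1)).castSucc := rfl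
      simp only [h1, h2, insertLast_castSucc, Fin.succAbove_lt_succAbove_iff]
      exact ⟨fun ⟨_, b⟩ => ⟨h, b⟩, fun ⟨_, b⟩ => ⟨by omega, b⟩⟩
    · exact ⟨fun ⟨a, _⟩ => by omega, fun ⟨a, _⟩ => by omega⟩
  have hm : m ∉ descentSet σ := by
    rw [mem_descentSet]
    rintro ⟨h, -⟩
    omega
  ext i
  by_cases hi : i = m
  · subst hi
    rw [hlast]
    split_ifs with h <;> simp [h, hm]
  · rw [hne i hi]
    split_ifs with h <;> simp [hi]

/-- The monomial `X ^ edes π` if `π` has no odd descents, and `0` otherwise. -/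
noncomputable def evenDescentWeight {n : ℕ} (π : Equiv.Perm (Fin n)) : ℚ[X] :=
  0 ^ odes π * X ^ edes π

/-- The factor contributed to `evenDescentWeight` by a descent at the index `m`. -/
noncomputable def descentFactor (m : ℕ) : ℚ[X] := if Even m then 0 else X

lemma evenDescentWeight_insertLast {m : ℕ} (σ : Equiv.Perm (Fin (m + 1))) (r : Fin (m + 2)) :
    evenDescentWeight (insertLast σ r) = evenDescentWeight σ *
      if r ≤ (σ (Fin.last m)).castSucc then descentFactor m else 1 := by
  have hm : m ∉ descentSet σ := by
    rw [mem_descentSet]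
    rintro ⟨h, -⟩
    omega
  unfold evenDescentWeight odes edes descentFactor
  rw [descentSet_insertLast]
  split_ifs with h he
  · simp [filter_insert, he, hm]
  · have ho := Nat.not_even_iff_odd.1 he
    simp [filter_insert, ho, he, hm, pow_succ]
    ring
  · simp

/-- The generating polynomial of even descents of permutations of `Fin n` without odd descents. -/
noncomputable def evenDescentPoly (n : ℕ) : ℚ[X] :=
  ∑ π : Equiv.Perm (Fin n), evenDescentWeight π

lemma coeff_evenDescentPoly (n k : ℕ) : (evenDescentPoly n).coeff k = aNum n k := by
  simp only [evenDescentPoly, evenDescentWeight, finsetSum_coeff, aNum, card_filter,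
    Nat.cast_sum]
  refine sum_congr rfl fun π _ => ?_
  by_cases h : odes π = 0
  · simp [h, coeff_X_pow, eq_comm]
  · simp [h]

/-- The part of `evenDescentPoly (m + 1)` coming from permutations with last value `r`. -/
noncomputable def evenDescentPolyLast (m r : ℕ) : ℚ[X] :=
  ∑ π : Equiv.Perm (Fin (m + 1)), if (π (Fin.last m) : ℕ) = r then evenDescentWeight π else 0

lemma sum_range_evenDescentPolyLast (m s : ℕ) :
    ∑ r ∈ range s, evenDescentPolyLast m r =
      ∑ π : Equiv.Perm (Fin (m + 1)),
        if (π (Fin.last m) : ℕ) < s then evenDescentWeight π else 0 := by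
  unfold evenDescentPolyLast
  rw [sum_comm]
  refine sum_congr rfl fun π _ => ?_
  simp

lemma evenDescentPoly_succ (m : ℕ) :
    evenDescentPoly (m + 1) = ∑ r ∈ range (m + 1), evenDescentPolyLast m r := by
  rw [sum_range_evenDescentPolyLast]
  simp [evenDescentPoly, -Order.lt_add_one_iff]

lemma evenDescentPolyLast_succ (m r : ℕ) (hr : r < m + 2) :
    evenDescentPolyLast (m + 1) r = descentFactor m * evenDescentPoly (m + 1) +
      (1 - descentFactor m) * ∑ s ∈ range r, evenDescentPolyLast m s := by
  rw [sum_range_evenDescentPolyLast, evenDescentPoly, mul_sum, mul_sum, ← sum_add_distrib,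
    evenDescentPolyLast, ← (insertLast_bijective (m + 1)).sum_comp, Fintype.sum_prod_type]
  refine sum_congr rfl fun σ _ => ?_
  rw [sum_eq_single (⟨r, hr⟩ : Fin (m + 2))]
  · simp only [insertLast_last, if_true, evenDescentWeight_insertLast, Fin.le_def,
      Fin.val_castSucc]
    split_ifs <;> first | omega | ring
  · intro b _ hb
    simp only [insertLast_last]
    rw [if_neg]
    exact fun h => hb (Fin.ext h)
  · simp

/-- The polynomial `X * evenDescentPoly (2 * j)`, with value `1` instead of `X` at `j = 0`. -/
noncomputable def evenBlockPoly (j : ℕ) : ℚ[X] :=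
  if j = 0 then 1 else X * evenDescentPoly (2 * j)

lemma sum_range_sum_mul_choose (m n : ℕ) (c : ℕ → ℚ[X]) (d : ℕ → ℕ) :
    ∑ r ∈ range m, ∑ i ∈ range n, c i * (r.choose (d i) : ℚ[X]) =
      ∑ i ∈ range n, c i * (m.choose (d i + 1) : ℚ[X]) := by
  rw [sum_comm]
  refine sum_congr rfl fun i _ => ?_
  rw [← mul_sum]
  congr 1
  induction m with
  | zero => simp
  | succ m ih =>
    rw [sum_range_succ, ih, Nat.choose_succ_succ]
    push_cast
    ring

lemma evenDescentPolyLast_odd (n : ℕ)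
    (h : ∀ r < 2 * n + 1, evenDescentPolyLast (2 * n) r =
      ∑ i ∈ range (n + 1), evenBlockPoly (n - i) * (1 - X) ^ i * (r.choose (2 * i) : ℚ[X]))
    (r : ℕ) (hr : r < 2 * n + 2) :
    evenDescentPolyLast (2 * n + 1) r =
      ∑ i ∈ range (n + 1), evenBlockPoly (n - i) * (1 - X) ^ i *
        (r.choose (2 * i + 1) : ℚ[X]) := by
  rw [evenDescentPolyLast_succ _ _ hr, ← sum_range_sum_mul_choose, descentFactor,
    if_pos (even_two_mul n)]
  simp only [zero_mul, zero_add, sub_zero, one_mul]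
  refine sum_congr rfl fun s hs => h s ?_
  have := mem_range.1 hs
  omega

lemma evenDescentPolyLast_even (n : ℕ) :
    ∀ r < 2 * n + 1, evenDescentPolyLast (2 * n) r =
      ∑ i ∈ range (n + 1), evenBlockPoly (n - i) * (1 - X) ^ i *
        (r.choose (2 * i) : ℚ[X]) := by
  induction n with
  | zero =>
    intro r hr
    obtain rfl : r = 0 := by omega
    have h (π : Equiv.Perm (Fin 1)) : evenDescentWeight π = 1 := by
      have : descentSet π = ∅ := by
        ext i
        rw [mem_descentSet]
        simp
      simp [evenDescentWeight, odes, edes, this]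
    simp [evenDescentPolyLast, evenBlockPoly, h]
  | succ n ih =>
    intro r hr
    have ho := evenDescentPolyLast_odd n ih
    have hne : ¬ Even (2 * n + 1) := by simp
    rw [show 2 * (n + 1) = 2 * n + 1 + 1 by ring, evenDescentPolyLast_succ _ _ (by omega),
      sum_range_succ', descentFactor, if_neg hne]
    have hs : ∑ s ∈ range r, evenDescentPolyLast (2 * n + 1) s =
        ∑ i ∈ range (n + 1), evenBlockPoly (n - i) * (1 - X) ^ i *
          (r.choose (2 * i + 1 + 1) : ℚ[X]) := by
      rw [← sum_range_sum_mul_choose]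
      refine sum_congr rfl fun s hs => ho s ?_
      have := mem_range.1 hs
      omega
    rw [hs, mul_sum, add_comm]
    congr 1
    · refine sum_congr rfl fun i _ => ?_
      rw [Nat.add_sub_add_right, show 2 * (i + 1) = 2 * i + 1 + 1 by ring]
      ring
    · simp [evenBlockPoly, mul_add]

lemma evenDescentPoly_odd (n : ℕ) :
    evenDescentPoly (2 * n + 1) = ∑ i ∈ range (n + 1), evenBlockPoly (n - i) * (1 - X) ^ i *
      ((2 * n + 1).choose (2 * i + 1) : ℚ[X]) := by
  rw [evenDescentPoly_succ, ← sum_range_sum_mul_choose]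
  exact sum_congr rfl fun s hs => evenDescentPolyLast_even n s (mem_range.1 hs)

lemma evenDescentPoly_even (n : ℕ) :
    evenDescentPoly (2 * n + 2) = ∑ i ∈ range (n + 1), evenBlockPoly (n - i) * (1 - X) ^ i *
      ((2 * n + 2).choose (2 * i + 2) : ℚ[X]) := by
  rw [evenDescentPoly_succ, ← sum_range_sum_mul_choose]
  exact sum_congr rfl fun s hs =>
    evenDescentPolyLast_odd n (evenDescentPolyLast_even n) s (mem_range.1 hs)

lemma evenBlockPoly_succ (n : ℕ) :
    evenBlockPoly (n + 1) = X * ∑ i ∈ range (n + 2), evenBlockPoly (n + 1 - i) * (1 - X) ^ i *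
      ((2 * (n + 1)).choose (2 * i) : ℚ[X]) := by
  have h : evenBlockPoly (n + 1) = X * ∑ i ∈ range (n + 1), evenBlockPoly (n - i) * (1 - X) ^ i *
      ((2 * n + 2).choose (2 * i + 2) : ℚ[X]) := by
    rw [← evenDescentPoly_even, evenBlockPoly, if_neg (by omega), mul_add, mul_one]
  rw [sum_range_succ']
  have h' : ∑ i ∈ range (n + 1), evenBlockPoly (n + 1 - (i + 1)) * (1 - X) ^ (i + 1) *
      ((2 * (n + 1)).choose (2 * (i + 1)) : ℚ[X]) = (1 - X) *
      ∑ i ∈ range (n + 1), evenBlockPoly (n - i) * (1 - X) ^ i *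
        ((2 * n + 2).choose (2 * i + 2) : ℚ[X]) := by
    rw [mul_sum]
    refine sum_congr rfl fun i _ => ?_
    rw [Nat.add_sub_add_right, mul_add, mul_add, mul_one]
    ring
  rw [h']
  simp only [tsub_zero, pow_zero, mul_one, mul_zero, Nat.choose_zero_right, Nat.cast_one]
  linear_combination (1 - X) * h

/-- The power series obtained by differentiating each coefficient. -/
noncomputable def coeffDerivative (f : PowerSeries ℚ[X]) : PowerSeries ℚ[X] :=
  PowerSeries.mk fun n => derivative (PowerSeries.coeff n f)

@[simp] lemma coeff_coeffDerivative (f : PowerSeries ℚ[X]) (n : ℕ) :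
    PowerSeries.coeff n (coeffDerivative f) = derivative (PowerSeries.coeff n f) :=
  PowerSeries.coeff_mk _ _

lemma coeffDerivative_add (f g : PowerSeries ℚ[X]) :
    coeffDerivative (f + g) = coeffDerivative f + coeffDerivative g := by
  ext1 n
  simp

lemma coeffDerivative_mul (f g : PowerSeries ℚ[X]) :
    coeffDerivative (f * g) = coeffDerivative f * g + f * coeffDerivative g := by
  ext1 n
  simp [PowerSeries.coeff_mul, sum_add_distrib]

@[simp] lemma coeffDerivative_C (p : ℚ[X]) :
    coeffDerivative (PowerSeries.C p) = PowerSeries.C (derivative p) := by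
  ext1 n
  simp only [coeff_coeffDerivative, PowerSeries.coeff_C]
  split_ifs <;> simp

/-- The power series `∑ (1 - X) ^ i / (2 * i)! * z ^ i`. -/
noncomputable def coshSeries : PowerSeries ℚ[X] :=
  PowerSeries.mk fun i => C ((1 : ℚ) / (2 * i).factorial) * (1 - X) ^ i

/-- The power series `∑ (1 - X) ^ i / (2 * i + 1)! * z ^ i`. -/
noncomputable def sinhSeries : PowerSeries ℚ[X] :=
  PowerSeries.mk fun i => C ((1 : ℚ) / (2 * i + 1).factorial) * (1 - X) ^ i

/-- The power series `∑ evenBlockPoly j / (2 * j)! * z ^ j`. -/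
noncomputable def evenBlockSeries : PowerSeries ℚ[X] :=
  PowerSeries.mk fun j => C ((1 : ℚ) / (2 * j).factorial) * evenBlockPoly j

lemma C_choose_div (m j : ℕ) (h : j ≤ m) :
    C ((1 : ℚ) / (m - j).factorial) * C ((1 : ℚ) / j.factorial) =
      C ((1 : ℚ) / m.factorial) * (m.choose j : ℚ[X]) := by
  rw [← map_natCast (C : ℚ →+* ℚ[X]), ← C_mul, ← C_mul, Nat.cast_choose ℚ h]
  congr 1
  field_simp

lemma coeff_evenBlockSeries_mul_sinhSeries (n : ℕ) :
    PowerSeries.coeff n (evenBlockSeries * sinhSeries) =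
      C ((1 : ℚ) / (2 * n + 1).factorial) * evenDescentPoly (2 * n + 1) := by
  rw [evenDescentPoly_odd, mul_comm evenBlockSeries, PowerSeries.coeff_mul,
    Nat.sum_antidiagonal_eq_sum_range_succ_mk, mul_sum]
  refine sum_congr rfl fun i hi => ?_
  have hi' := mem_range.1 hi
  have h := C_choose_div (2 * n + 1) (2 * i + 1) (by omega)
  rw [show 2 * n + 1 - (2 * i + 1) = 2 * (n - i) by omega] at h
  simp only [evenBlockSeries, sinhSeries, PowerSeries.coeff_mk]
  linear_combination evenBlockPoly (n - i) * (1 - X) ^ i * h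

lemma evenBlockSeries_eq :
    evenBlockSeries = PowerSeries.C X * (evenBlockSeries * coshSeries) + PowerSeries.C (1 - X) := by
  ext1 n
  rw [map_add, PowerSeries.coeff_C_mul, PowerSeries.coeff_C, mul_comm evenBlockSeries,
    PowerSeries.coeff_mul, Nat.sum_antidiagonal_eq_sum_range_succ_mk]
  cases n with
  | zero => simp [evenBlockSeries, coshSeries, evenBlockPoly]
  | succ n =>
    rw [if_neg (by omega), add_zero, evenBlockSeries, PowerSeries.coeff_mk, evenBlockPoly_succ,
      mul_left_comm, mul_sum]
    congr 1
    refine sum_congr rfl fun i hi => ?_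
    have hi' := mem_range.1 hi
    have h := C_choose_div (2 * (n + 1)) (2 * i) (by omega)
    rw [show 2 * (n + 1) - 2 * i = 2 * (n + 1 - i) by omega] at h
    simp only [coshSeries, PowerSeries.coeff_mk]
    linear_combination -evenBlockPoly (n + 1 - i) * (1 - X) ^ i * h

lemma C_one_div_factorial_succ (m : ℕ) :
    C ((1 : ℚ) / (m + 1).factorial) * ((m : ℚ[X]) + 1) = C ((1 : ℚ) / m.factorial) := by
  rw [← map_natCast (C : ℚ →+* ℚ[X]), ← C_1, ← C_add, ← C_mul, Nat.factorial_succ]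
  congr 1
  push_cast
  field_simp

lemma two_mul_derivative_coshSeries :
    2 * PowerSeries.derivative ℚ[X] coshSeries = PowerSeries.C (1 - X) * sinhSeries := by
  ext1 n
  have h := C_one_div_factorial_succ (2 * n + 1)
  rw [two_mul, map_add, PowerSeries.coeff_C_mul, PowerSeries.coeff_derivative]
  simp only [coshSeries, sinhSeries, PowerSeries.coeff_mk]
  rw [show 2 * (n + 1) = 2 * n + 1 + 1 by ring]
  push_cast at h
  linear_combination (1 - X) ^ (n + 1) * h

lemma sinhSeries_add_derivative :
    sinhSeries + 2 * (PowerSeries.X * PowerSeries.derivative ℚ[X] sinhSeries) = coshSeries := by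
  ext1 n
  have h := C_one_div_factorial_succ (2 * n)
  rw [two_mul]
  cases n with
  | zero => simp [coshSeries, sinhSeries]
  | succ n =>
    simp only [map_add, PowerSeries.coeff_succ_X_mul, PowerSeries.coeff_derivative]
    simp only [coshSeries, sinhSeries, PowerSeries.coeff_mk]
    push_cast at h
    linear_combination (1 - X) ^ (n + 1) * h

lemma two_mul_coeffDerivative_coshSeries :
    2 * coeffDerivative coshSeries = -(PowerSeries.X * sinhSeries) := by
  ext1 n
  rw [two_mul]
  cases n with
  | zero =>
    rw [← two_mul, ← map_ofNat PowerSeries.C, PowerSeries.coeff_C_mul, coeff_coeffDerivative]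
    simp [coshSeries]
  | succ n =>
    have h := C_one_div_factorial_succ (2 * n + 1)
    simp only [map_add, map_neg, PowerSeries.coeff_succ_X_mul, coeff_coeffDerivative]
    simp only [coshSeries, sinhSeries, PowerSeries.coeff_mk, derivative_C_mul, derivative_pow_succ,
      derivative_sub, derivative_one, derivative_X]
    rw [show 2 * (n + 1) = 2 * n + 1 + 1 by ring]
    rw [C_add, C_1, C_eq_natCast]
    push_cast at h
    linear_combination -(1 - X) ^ n * h

lemma coshSeries_sq :
    coshSeries ^ 2 - PowerSeries.C (1 - X) * (PowerSeries.X * sinhSeries ^ 2) = 1 := by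
  apply PowerSeries.derivative.ext
  · simp only [map_sub (PowerSeries.derivative _), Derivation.leibniz, Derivation.leibniz_pow, PowerSeries.derivative_C,
      PowerSeries.derivative_X, PowerSeries.derivative_one, smul_eq_mul, nsmul_eq_mul]
    push_cast
    linear_combination coshSeries * two_mul_derivative_coshSeries -
      PowerSeries.C (1 - X) * sinhSeries * sinhSeries_add_derivative
  · simp [coshSeries]

lemma evenBlockSeries_mul_sinhSeries_add_derivative :
    evenBlockSeries * sinhSeries +
        2 * (PowerSeries.X * PowerSeries.derivative ℚ[X] (evenBlockSeries * sinhSeries)) =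
      PowerSeries.C (X + 1) * (PowerSeries.X * PowerSeries.derivative ℚ[X] evenBlockSeries) +
        evenBlockSeries + PowerSeries.C (1 - X ^ 2) * coeffDerivative evenBlockSeries := by
  have hW := evenBlockSeries_eq
  have hD := congrArg (PowerSeries.derivative ℚ[X]) hW
  have hδ := congrArg coeffDerivative hW
  have hC := two_mul_derivative_coshSeries
  have hS := sinhSeries_add_derivative
  have hδC := two_mul_coeffDerivative_coshSeries
  have hsq := coshSeries_sq
  simp only [map_add, Derivation.leibniz, PowerSeries.derivative_C, smul_eq_mul] at hD
  simp only [coeffDerivative_add, coeffDerivative_mul, coeffDerivative_C, derivative_X,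
    derivative_sub, derivative_one] at hδ
  have hμ : (1 - PowerSeries.C X : PowerSeries ℚ[X]) ≠ 0 := by
    rw [← map_one PowerSeries.C, ← map_sub, Ne, map_eq_zero_iff _ PowerSeries.C_injective,
      sub_eq_zero]
    exact fun h => by simpa using congrArg (eval (0 : ℚ)) h
  have h2 : (2 : PowerSeries ℚ[X]) ≠ 0 := by
    rw [← map_ofNat PowerSeries.C, Ne, map_eq_zero_iff _ PowerSeries.C_injective]
    exact two_ne_zero
  simp only [Derivation.leibniz, smul_eq_mul, map_add, map_sub, map_one, map_zero, map_pow] at *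
  generalize evenBlockSeries = W at *
  generalize PowerSeries.derivative ℚ[X] W = W' at *
  generalize PowerSeries.derivative ℚ[X] coshSeries = C' at *
  generalize PowerSeries.derivative ℚ[X] sinhSeries = S' at *
  generalize coeffDerivative W = δW at *
  generalize coeffDerivative coshSeries = δC at *
  generalize coshSeries = c at *
  generalize sinhSeries = s at *
  generalize PowerSeries.C (X : ℚ[X]) = y at *
  generalize (PowerSeries.X : PowerSeries ℚ[X]) = z at *
  have hW' : 2 * W' = y * W ^ 2 * s := by
    apply mul_left_cancel₀ hμ
    linear_combination 2 * W * hD - 2 * W' * hW + y * W ^ 2 * hC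
  have hδW : 2 * ((1 - y) * δW) = 2 * W ^ 2 * c - y * W ^ 2 * (z * s) - 2 * W := by
    linear_combination 2 * W * hδ - 2 * δW * hW + y * W ^ 2 * hδC
  have hquad : (1 - y) * W * c + y * W ^ 2 * (c ^ 2 - 1) =
      (1 - y) * W + (1 - y ^ 2) * (W ^ 2 * c - W) := by
    linear_combination (-W * c - y * W) * hW
  apply mul_left_cancel₀ h2
  apply mul_left_cancel₀ hμ
  linear_combination 2 * (1 - y) * W * hS + (1 - y) * (2 * z * s - (y + 1) * z) * hW' -
    (1 - y ^ 2) * hδW + 2 * hquad - 2 * y * W ^ 2 * hsq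

lemma evenDescentPoly_odd_eq (n : ℕ) (hn : n ≠ 0) :
    evenDescentPoly (2 * n + 1) =
      X ^ 2 * (((n : ℚ[X]) - 1) * evenDescentPoly (2 * n) -
          X * derivative (evenDescentPoly (2 * n))) +
        X * (((n : ℚ[X]) + 1) * evenDescentPoly (2 * n)) + evenDescentPoly (2 * n) +
        X * derivative (evenDescentPoly (2 * n)) := by
  obtain ⟨n, rfl⟩ := Nat.exists_eq_succ_of_ne_zero hn
  rw [Nat.succ_eq_add_one] at *
  have h := congrArg (PowerSeries.coeff (n + 1)) evenBlockSeries_mul_sinhSeries_add_derivative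
  have hf := C_one_div_factorial_succ (2 * (n + 1))
  rw [two_mul (PowerSeries.X * _)] at h
  simp only [map_add (PowerSeries.coeff _), PowerSeries.coeff_C_mul, PowerSeries.coeff_succ_X_mul,
    PowerSeries.coeff_derivative, coeff_evenBlockSeries_mul_sinhSeries,
    coeff_coeffDerivative] at h
  simp only [evenBlockSeries, PowerSeries.coeff_mk, evenBlockPoly, if_neg hn, derivative_C,
    derivative_mul, derivative_X] at h
  have h0 : C ((1 : ℚ) / (2 * (n + 1)).factorial) ≠ 0 := by
    rw [Ne, C_eq_zero]
    positivity
  apply mul_left_cancel₀ h0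
  push_cast at hf ⊢
  linear_combination h - evenDescentPoly (2 * (n + 1) + 1) * hf

lemma coeff_X_mul_derivative (p : ℚ[X]) (k : ℕ) :
    (X * derivative p).coeff k = k * p.coeff k := by
  cases k with
  | zero => simp
  | succ k =>
    rw [coeff_X_mul, coeff_derivative]
    push_cast
    ring

/-- a_{2n+1,k} = (n−k+1) a_{2n,k−2} + (n+1) a_{2n,k−1} + (k+1) a_{2n,k},
with a_{m,j} = 0 for j < 0. -/
theorem aNum_odd_rec (n k : ℕ) (h1 : 1 ≤ k) (h2 : k ≤ n) :
    aNum (2 * n + 1) k =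
      (n - k + 1) * aNumInt (2 * n) ((k : ℤ) - 2) +
        (n + 1) * aNumInt (2 * n) ((k : ℤ) - 1) + (k + 1) * aNum (2 * n) k := by
  have h := congrArg (fun p => coeff p k) (evenDescentPoly_odd_eq n (by omega))
  rw [← @Nat.cast_inj ℚ]
  simp only [← C_eq_natCast, ← C_1, ← C_sub, ← C_add, coeff_add,
    coeff_X_mul_derivative] at h
  match k, h1 with
  | 1, _ =>
    simp only [coeff_X_pow_mul', coeff_X_mul, coeff_C_mul, coeff_evenDescentPoly] at h
    simp [aNumInt] at h ⊢
    linear_combination h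
  | k + 2, _ =>
    have e1 : ((k + 2 : ℕ) : ℤ) - 2 = (k : ℕ) := by push_cast; ring
    have e2 : ((k + 2 : ℕ) : ℤ) - 1 = (k + 1 : ℕ) := by push_cast; ring
    simp only [coeff_X_pow_mul, coeff_sub, coeff_X_mul_derivative, coeff_X_mul, coeff_C_mul,
      coeff_evenDescentPoly] at h
    simp only [e1, e2, aNumInt, Int.natCast_nonneg, if_true, Int.toNat_natCast]
    push_cast [h2] at h ⊢
    linear_combination h
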